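/- For integers n ≥ 2, k ≥ 1, q ≥ 0 with n ≥ k: (1/n!) · Σ over triples (T, c, m) of a labelled tree T on n vertices, an injective k-tuple c of vertices, and a function m assigning 2q ordered marks to vertices, of ∏_{i=1}^n (d_i(T) + 1_{i∈c} + m(i) - 1)! equals binomial(2n-1, n-k) · binomial(2n+2q+k-3, 2n-1) · (2q+k-2)!, where m(i) counts the marks at vertex i. -/

import Mathlib

open scoped Classical

/-!
On a vertex set of size `n ≥ 2`, labelled trees correspond to words of length `n - 2` over the
vertices in such a way that every vertex occurs one time less than its degree (Prüfer). To see this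
by induction, note that every tree has a leaf and every word misses a letter; trees in which `v` is
a leaf and words which miss `v` each consist of an object of size one less, on the vertices other
than `v`, and one further such vertex, and degrees and numbers of occurrences change alike.

Summing over trees and marks thus amounts to summing over words of length `n - 2 + s`, where `s` is
the number of marks. In Pólya's urn, the word weights `∏ (a v + occurrences of v)!` grow by the
factor `∑ a + n + m` when the length `m` increases by one, so their sum is a rising factorial. For
`a` the indicator of a `k`-tuple this value depends only on `k`, and there are `n! / (n - k)!` such
tuples.
-/

open Finset
open scoped Nat

/-- Equivalences respecting the weights `f` and `g` on overlapping pieces need not agree, but they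
show that the fibres of `f` and `g` match. -/
theorem exists_equiv_comp_eq_of_cover {ι α β γ : Type*} {f : α → γ} {g : β → γ} {p : ι → γ → Prop}
    (hf : ∀ a, ∃ i, p i (f a)) (hg : ∀ b, ∃ i, p i (g b))
    (h : ∀ i, ∃ e : {a // p i (f a)} ≃ {b // p i (g b)}, ∀ a, g (e a) = f a) :
    ∃ σ : α ≃ β, ∀ a, g (σ a) = f a := by
  have fiber (c : γ) : Nonempty ({a // f a = c} ≃ {b // g b = c}) := by
    by_cases hc : ∃ i, p i c
    · obtain ⟨i, hi⟩ := hc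
      obtain ⟨e, he⟩ := h i
      have restrict : {a : {a // p i (f a)} // f a = c} ≃ {b : {b // p i (g b)} // g b = c} :=
        e.subtypeEquiv fun a => by rw [he]
      exact ⟨(Equiv.subtypeSubtypeEquivSubtype (q := (f · = c)) fun ha => ha ▸ hi).symm.trans <|
        restrict.trans <| Equiv.subtypeSubtypeEquivSubtype (q := (g · = c)) fun hb => hb ▸ hi⟩
    · have : IsEmpty {a // f a = c} := ⟨fun ⟨a, ha⟩ => hc (ha ▸ hf a)⟩
      have : IsEmpty {b // g b = c} := ⟨fun ⟨b, hb⟩ => hc (hb ▸ hg b)⟩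
      exact ⟨Equiv.equivOfIsEmpty _ _⟩
  exact ⟨Equiv.ofFiberEquiv fun c => (fiber c).some, Equiv.ofFiberEquiv_map _⟩

/-- The number of positions at which the word `u` has the letter `v`. For a marking `u` it is the
number `m(v)` of marks at the vertex `v`. -/
def letterCount {ι V : Type*} [Fintype ι] [DecidableEq V] (u : ι → V) (v : V) : ℕ :=
  #{j | u j = v}

section Words

variable {V : Type*} [DecidableEq V]

section

variable {ι : Type*} [Fintype ι]

lemma letterCount_eq_zero_iff {u : ι → V} {v : V} : letterCount u v = 0 ↔ ∀ j, u j ≠ v := by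
  simp [letterCount, filter_eq_empty_iff]

lemma letterCount_comp {W : Type*} [DecidableEq W] {f : V → W} (hf : Function.Injective f)
    (u : ι → V) (v : V) : letterCount (fun j => f (u j)) (f v) = letterCount u v := by
  simp only [letterCount, hf.eq_iff]

lemma sum_letterCount [Fintype V] (u : ι → V) : ∑ v, letterCount u v = Fintype.card ι :=
  (card_eq_sum_card_fiberwise fun _ _ => mem_coe.2 (mem_univ _)).symm

lemma exists_letterCount_eq_zero [Fintype V] (h : Fintype.card ι < Fintype.card V) (u : ι → V) :
    ∃ v, letterCount u v = 0 := by
  have hu : ¬ Function.Surjective u := fun hu => h.not_ge (Fintype.card_le_of_surjective u hu)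
  simpa only [Function.Surjective, not_forall, not_exists, ← letterCount_eq_zero_iff] using hu

end

lemma letterCount_cons {m : ℕ} (w : V) (u : Fin m → V) (v : V) :
    letterCount (Fin.cons w u : Fin (m + 1) → V) v = letterCount u v + if v = w then 1 else 0 := by
  simp only [letterCount, card_filter, Fin.sum_univ_succ, Fin.cons_zero, Fin.cons_succ, eq_comm,
    add_comm]

/-- Prepending a letter, as an equivalence between pairs of a word and a letter over the alphabet
without `v` and nonempty words over the whole alphabet that miss `v`. -/
def consAvoidingEquiv (m : ℕ) (v : V) :
    (Fin m → ({v}ᶜ : Set V)) × ({v}ᶜ : Set V) ≃ {u : Fin (m + 1) → V // letterCount u v = 0} :=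
  (Equiv.prodComm _ _).trans <| (Fin.consEquiv fun _ => ({v}ᶜ : Set V)).trans <|
    Equiv.subtypePiEquivPi.symm.trans <| Equiv.subtypeEquivRight fun _ =>
      letterCount_eq_zero_iff.symm

lemma letterCount_consAvoidingEquiv {m : ℕ} {v : V} (u : Fin m → ({v}ᶜ : Set V))
    (w x : ({v}ᶜ : Set V)) :
    letterCount (consAvoidingEquiv m v (u, w)).1 x = letterCount u x + if x = w then 1 else 0 := by
  rw [← letterCount_cons, ← letterCount_comp Subtype.val_injective]
  rfl

variable [Fintype V]

lemma prod_factorial_add_ite (a : V → ℕ) (w : V) :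
    ∏ v, (a v + if v = w then 1 else 0)! = (a w + 1) * ∏ v, (a v)! := by
  have hfactor (v : V) :
      (a v + if v = w then 1 else 0)! = (if v = w then a v + 1 else 1) * (a v)! := by
    split_ifs <;> simp [Nat.factorial_succ]
  simp only [hfactor, prod_mul_distrib, prod_ite_eq', mem_univ, if_true]

theorem sum_prod_factorial_add_letterCount (a : V → ℕ) (m : ℕ) :
    ∑ u : Fin m → V, ∏ v, (a v + letterCount u v)! =
      (∏ v, (a v)!) * (∑ v, a v + Fintype.card V).ascFactorial m := by
  induction m generalizing a with
  | zero => simp [letterCount]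
  | succ m ih =>
    set S := ∑ v, a v + Fintype.card V with hS
    have hfirst (w : V) :
        ∑ u : Fin m → V, ∏ v, (a v + letterCount (Fin.cons w u : Fin (m + 1) → V) v)! =
          (a w + 1) * ((∏ v, (a v)!) * (S + 1).ascFactorial m) := by
      have hsum : ∑ v, (a v + if v = w then 1 else 0) + Fintype.card V = S + 1 := by
        simp only [sum_add_distrib, sum_ite_eq', mem_univ, if_true, hS]
        ring
      simp only [letterCount_cons, add_comm (letterCount _ _), ← add_assoc]
      rw [ih, hsum, prod_factorial_add_ite, mul_assoc]
    calc ∑ u : Fin (m + 1) → V, ∏ v, (a v + letterCount u v)!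
        = ∑ w, ∑ u : Fin m → V, ∏ v, (a v + letterCount (Fin.cons w u : Fin (m + 1) → V) v)! := by
          rw [← (Fin.consEquiv fun _ => V).sum_comp, Fintype.sum_prod_type]
          rfl
      _ = S * ((∏ v, (a v)!) * (S + 1).ascFactorial m) := by
          simp only [hfirst, ← sum_mul, sum_add_distrib, sum_const, card_univ, smul_eq_mul,
            mul_one, hS]
      _ = (∏ v, (a v)!) * S.ascFactorial (m + 1) := by
          rw [mul_left_comm, Nat.succ_ascFactorial, Nat.ascFactorial_succ]

end Words

/-- The trees with vertex set `V`, that is, `𝒯_n` when `V = Fin n`. -/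
abbrev LabelledTree (V : Type*) : Type _ := {G : SimpleGraph V // G.IsTree}

/-- The graph obtained from a graph `G` on the vertices other than `v` by joining `v` to `w`. -/
def attachLeaf {V : Type*} (v : V) (G : SimpleGraph ({v}ᶜ : Set V)) (w : ({v}ᶜ : Set V)) :
    SimpleGraph V :=
  G.spanningCoe ⊔ SimpleGraph.edge v w

section Leaves

variable {V : Type*} {v : V}

lemma attachLeaf_adj_self {G : SimpleGraph ({v}ᶜ : Set V)} {w : ({v}ᶜ : Set V)} {x : V} :
    (attachLeaf v G w).Adj v x ↔ x = w := by
  have hw : v ≠ w := fun h => w.2 h.symm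
  simp only [attachLeaf, SimpleGraph.sup_adj, SimpleGraph.edge_adj, SimpleGraph.map_adj]
  aesop

lemma attachLeaf_adj_coe {G : SimpleGraph ({v}ᶜ : Set V)} {w x y : ({v}ᶜ : Set V)} :
    (attachLeaf v G w).Adj x y ↔ G.Adj x y := by
  have hx : (x : V) ≠ v := x.2
  have hy : (y : V) ≠ v := y.2
  simp [attachLeaf, SimpleGraph.edge_adj, hx, hy]

lemma induce_attachLeaf (G : SimpleGraph ({v}ᶜ : Set V)) (w : ({v}ᶜ : Set V)) :
    (attachLeaf v G w).induce {v}ᶜ = G := by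
  ext x y
  exact attachLeaf_adj_coe

lemma attachLeaf_inj {G G' : SimpleGraph ({v}ᶜ : Set V)} {w w' : ({v}ᶜ : Set V)} :
    attachLeaf v G w = attachLeaf v G' w' ↔ G = G' ∧ w = w' := by
  refine ⟨fun h => ⟨?_, ?_⟩, fun ⟨hG, hw⟩ => hG ▸ hw ▸ rfl⟩
  · rw [← induce_attachLeaf G w, h, induce_attachLeaf]
  · rw [← SetCoe.ext_iff, ← attachLeaf_adj_self (G := G'), ← h, attachLeaf_adj_self]

lemma attachLeaf_induce {T : SimpleGraph V} {w : ({v}ᶜ : Set V)} (h : ∀ x, T.Adj v x ↔ x = w) :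
    attachLeaf v (T.induce {v}ᶜ) w = T := by
  ext x y
  by_cases hx : x = v
  · subst hx
    rw [attachLeaf_adj_self, h]
  by_cases hy : y = v
  · subst hy
    rw [SimpleGraph.adj_comm, attachLeaf_adj_self, SimpleGraph.adj_comm, h]
  exact attachLeaf_adj_coe (x := ⟨x, hx⟩) (y := ⟨y, hy⟩)

variable [Fintype V]

lemma exists_attachLeaf_induce_eq {T : SimpleGraph V} (hv : T.degree v = 1) :
    ∃ w, attachLeaf v (T.induce {v}ᶜ) w = T := by
  obtain ⟨w, hvw, hunique⟩ := SimpleGraph.degree_eq_one_iff_existsUnique_adj.1 hv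
  exact ⟨⟨w, hvw.ne'⟩, attachLeaf_induce fun x => ⟨hunique x, fun h => h ▸ hvw⟩⟩

lemma degree_eq_degree_induce_compl_singleton_add (T : SimpleGraph V) (x : ({v}ᶜ : Set V)) :
    T.degree x = (T.induce {v}ᶜ).degree x + if T.Adj v x then 1 else 0 := by
  have hT := T.degree_eq_sum_if_adj (R := ℕ) x
  have hinduce := (T.induce {v}ᶜ).degree_eq_sum_if_adj (R := ℕ) x
  rw [Fintype.sum_eq_add_sum_subtype_ne _ v] at hT
  simp only [Nat.cast_id] at hT hinduce
  rw [hT, hinduce, add_comm, T.adj_comm]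
  rfl

lemma degree_attachLeaf_self (G : SimpleGraph ({v}ᶜ : Set V)) (w : ({v}ᶜ : Set V)) :
    (attachLeaf v G w).degree v = 1 :=
  SimpleGraph.degree_eq_one_iff_existsUnique_adj.2
    ⟨w, attachLeaf_adj_self.2 rfl, fun _ => attachLeaf_adj_self.1⟩

lemma degree_attachLeaf_coe [DecidableEq V] (G : SimpleGraph ({v}ᶜ : Set V))
    (w x : ({v}ᶜ : Set V)) :
    (attachLeaf v G w).degree x = G.degree x + if x = w then 1 else 0 := by
  rw [degree_eq_degree_induce_compl_singleton_add]
  simp only [attachLeaf_adj_self, SetCoe.ext_iff]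
  congr! 2
  exact induce_attachLeaf G w

lemma card_compl_singleton_add_one (v : V) :
    Fintype.card ({v}ᶜ : Set V) + 1 = Fintype.card V := by
  rw [Fintype.card_compl_set, Set.card_singleton]
  exact Nat.sub_add_cancel (Fintype.card_pos_iff.2 ⟨v⟩)

lemma isTree_induce_compl_singleton_iff {T : SimpleGraph V} (hv : T.degree v = 1) :
    (T.induce {v}ᶜ).IsTree ↔ T.IsTree := by
  refine ⟨fun h => ?_, fun h =>
    ⟨h.connected.induce_compl_singleton_of_degree_eq_one hv, h.isAcyclic.induce _⟩⟩
  rw [SimpleGraph.isTree_iff_connected_and_card] at h ⊢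
  obtain ⟨hconn, hcard⟩ := h
  obtain ⟨w, hvw, -⟩ := SimpleGraph.degree_eq_one_iff_existsUnique_adj.1 hv
  constructor
  · rw [SimpleGraph.connected_iff_exists_forall_reachable]
    refine ⟨w, fun x => ?_⟩
    by_cases hx : x = v
    · exact hx ▸ hvw.symm.reachable
    · exact (hconn.preconnected ⟨w, hvw.ne'⟩ ⟨x, hx⟩).map (SimpleGraph.Embedding.induce _).toHom
  · have hedges : #(T.induce {v}ᶜ).edgeFinset = #T.edgeFinset - 1 := by
      rw [T.card_edgeFinset_induce_compl_singleton, T.card_edgeFinset_deleteIncidenceSet, hv]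
    have hpos : 0 < #T.edgeFinset := card_pos.2 ⟨s(v, w), SimpleGraph.mem_edgeFinset.2 hvw⟩
    have hverts := card_compl_singleton_add_one v
    simp only [Nat.card_eq_fintype_card, ← SimpleGraph.edgeFinset_card] at hcard ⊢
    omega

omit [Fintype V] in
lemma isTree_attachLeaf_iff [Finite V] {G : SimpleGraph ({v}ᶜ : Set V)} {w : ({v}ᶜ : Set V)} :
    (attachLeaf v G w).IsTree ↔ G.IsTree := by
  have := Fintype.ofFinite V
  rw [← isTree_induce_compl_singleton_iff (degree_attachLeaf_self G w), induce_attachLeaf]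

/-- Attaching the leaf `v`, as an equivalence between pairs of a tree on the vertices other than `v`
and one of its vertices and trees in which `v` is a leaf. -/
noncomputable def attachLeafEquiv (v : V) :
    LabelledTree ({v}ᶜ : Set V) × ({v}ᶜ : Set V) ≃ {T : LabelledTree V // T.1.degree v = 1} :=
  Equiv.ofBijective
    (fun p => ⟨⟨attachLeaf v p.1.1 p.2, isTree_attachLeaf_iff.2 p.1.2⟩,
      degree_attachLeaf_self _ _⟩) <| by
    constructor
    · rintro ⟨⟨G, hG⟩, w⟩ ⟨⟨G', hG'⟩, w'⟩ h
      simpa [attachLeaf_inj] using h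
    · rintro ⟨⟨T, hT⟩, hv⟩
      obtain ⟨w, hw⟩ := exists_attachLeaf_induce_eq hv
      exact ⟨⟨⟨T.induce {v}ᶜ, (isTree_induce_compl_singleton_iff hv).2 hT⟩, w⟩, by simp [hw]⟩

lemma exists_equiv_leaf_avoiding [DecidableEq V] {m : ℕ} (v : V)
    (hσ : ∃ σ : LabelledTree ({v}ᶜ : Set V) ≃ (Fin m → ({v}ᶜ : Set V)),
      ∀ T x, T.1.degree x = letterCount (σ T) x + 1) :
    ∃ e : {T : LabelledTree V // T.1.degree v = 1} ≃
        {u : Fin (m + 1) → V // letterCount u v = 0},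
      ∀ T x, T.1.1.degree x = letterCount (e T).1 x + 1 := by
  obtain ⟨σ, hσ⟩ := hσ
  refine ⟨(attachLeafEquiv v).symm.trans <|
    (σ.prodCongr (Equiv.refl _)).trans (consAvoidingEquiv m v), ?_⟩
  rw [(attachLeafEquiv v).symm.forall_congr_left]
  rintro ⟨G, w⟩ x
  simp only [Equiv.trans_apply, Equiv.symm_symm, Equiv.symm_apply_apply, Equiv.prodCongr_apply,
    Prod.map_apply, Equiv.refl_apply]
  by_cases hx : x = v
  · subst hx
    rw [(attachLeafEquiv x (G, w)).2, (consAvoidingEquiv m x (σ G, w)).2]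
  · lift x to ({v}ᶜ : Set V) using hx
    rw [letterCount_consAvoidingEquiv, add_right_comm, ← hσ]
    exact degree_attachLeaf_coe G.1 w x

lemma degree_eq_one_of_card_eq_two {T : SimpleGraph V} (hT : T.Preconnected)
    (hV : Fintype.card V = 2) (v : V) : T.degree v = 1 := by
  have : Nontrivial V := Fintype.one_lt_card_iff_nontrivial.1 (by omega)
  have hpos := hT.degree_pos_of_nontrivial v
  have hlt := T.degree_lt_card_verts v
  omega

lemma nonempty_unique_labelledTree_of_card_eq_two (hV : Fintype.card V = 2) :
    Nonempty (Unique (LabelledTree V)) := by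
  obtain ⟨v⟩ : Nonempty V := Fintype.card_pos_iff.1 (by omega)
  have hcompl := card_compl_singleton_add_one v
  obtain ⟨_⟩ := Fintype.card_eq_one_iff_nonempty_unique.1
    (show Fintype.card ({v}ᶜ : Set V) = 1 by omega)
  have : Inhabited (LabelledTree ({v}ᶜ : Set V)) := ⟨⟨⊥, SimpleGraph.IsTree.of_subsingleton⟩⟩
  have : Unique (LabelledTree ({v}ᶜ : Set V) × ({v}ᶜ : Set V)) := Unique.mk' _
  have hleaf (T : LabelledTree V) : T.1.degree v = 1 :=
    degree_eq_one_of_card_eq_two T.2.connected.preconnected hV v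
  exact ⟨((Equiv.subtypeUnivEquiv hleaf).symm.trans (attachLeafEquiv v).symm).unique⟩

end Leaves

section DecoratedTrees

variable {V : Type*} [Fintype V] [DecidableEq V]

/-- The existence part of the Prüfer correspondence; `σ` need not be Prüfer's code. -/
theorem exists_equiv_degree_eq_letterCount_add_one {m : ℕ} (hV : Fintype.card V = m + 2) :
    ∃ σ : LabelledTree V ≃ (Fin m → V), ∀ T v, T.1.degree v = letterCount (σ T) v + 1 := by
  induction m generalizing V with
  | zero =>
    obtain ⟨_⟩ := nonempty_unique_labelledTree_of_card_eq_two hV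
    refine ⟨Equiv.ofUnique _ _, fun T v => ?_⟩
    rw [degree_eq_one_of_card_eq_two T.2.connected.preconnected hV,
      letterCount_eq_zero_iff.2 fun j => j.elim0]
  | succ m ih =>
    have : Nontrivial V := Fintype.one_lt_card_iff_nontrivial.1 (by omega)
    have hleaf (v : V) :
        ∃ e : {T : LabelledTree V // T.1.degree v = 1} ≃
            {u : Fin (m + 1) → V // letterCount u v + 1 = 1},
          ∀ T, (fun x => letterCount (e T).1 x + 1) = fun x => T.1.1.degree x := by
      have hcompl : Fintype.card ({v}ᶜ : Set V) = m + 2 := by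
        rw [Fintype.card_compl_set, Set.card_singleton, hV]
        rfl
      obtain ⟨e, he⟩ := exists_equiv_leaf_avoiding v (ih hcompl)
      exact ⟨e.trans <| Equiv.subtypeEquivRight fun _ => by rw [Nat.add_eq_right],
        fun T => funext fun x => (he T x).symm⟩
    obtain ⟨σ, hσ⟩ := exists_equiv_comp_eq_of_cover
      (f := fun (T : LabelledTree V) x => T.1.degree x)
      (g := fun (u : Fin (m + 1) → V) x => letterCount u x + 1)
      (p := fun v d => d v = 1)
      (fun T => T.2.exists_vert_degree_one_of_nontrivial)
      (fun u => by simpa using exists_letterCount_eq_zero (by simp [hV]) u) hleaf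
    exact ⟨σ, fun T v => (congrFun (hσ T) v).symm⟩

theorem sum_labelledTree_prod_factorial {m : ℕ} (hV : Fintype.card V = m + 2) (a : V → ℕ) :
    ∑ T : LabelledTree V, ∏ v, (a v + (T.1.degree v - 1))! =
      (∏ v, (a v)!) * (∑ v, a v + Fintype.card V).ascFactorial m := by
  obtain ⟨σ, hσ⟩ := exists_equiv_degree_eq_letterCount_add_one hV
  simp only [hσ, Nat.add_sub_cancel]
  rw [← sum_prod_factorial_add_letterCount]
  exact σ.sum_comp fun u => ∏ v, (a v + letterCount u v)!

theorem sum_labelledTree_sum_prod_factorial {m : ℕ} (hV : Fintype.card V = m + 2) (a : V → ℕ)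
    (s : ℕ) :
    ∑ T : LabelledTree V, ∑ u : Fin s → V, ∏ v, (T.1.degree v + a v + letterCount u v - 1)! =
      (∏ v, (a v)!) * (∑ v, a v + Fintype.card V).ascFactorial (m + s) := by
  have : Nontrivial V := Fintype.one_lt_card_iff_nontrivial.1 (by omega)
  have hterm (T : LabelledTree V) (u : Fin s → V) (v : V) :
      T.1.degree v + a v + letterCount u v - 1 = a v + letterCount u v + (T.1.degree v - 1) := by
    have := T.2.connected.preconnected.degree_pos_of_nontrivial v
    omega
  have hshift (u : Fin s → V) :
      ∑ v, (a v + letterCount u v) + Fintype.card V = ∑ v, a v + Fintype.card V + s := by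
    rw [sum_add_distrib, sum_letterCount, Fintype.card_fin, add_right_comm]
  rw [sum_comm]
  simp only [hterm, sum_labelledTree_prod_factorial hV, hshift, ← sum_mul,
    sum_prod_factorial_add_letterCount]
  rw [mul_assoc, Nat.ascFactorial_mul_ascFactorial, add_comm s]

lemma factorial_ite_one_zero (p : Prop) [Decidable p] : (if p then 1 else 0)! = 1 := by
  split_ifs <;> rfl

lemma sum_ite_exists_eq {k : ℕ} (c : Fin k ↪ V) :
    ∑ v, (if ∃ j, c j = v then 1 else 0) = k := by
  have hrange : ({v | ∃ j, c j = v} : Finset V) = univ.map c := by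
    ext
    simp
  rw [← card_filter, hrange, card_map, card_univ, Fintype.card_fin]

omit [DecidableEq V] in
lemma ncard_neighborSet (G : SimpleGraph V) (v : V) : (G.neighborSet v).ncard = G.degree v := by
  rw [Set.ncard_eq_toFinset_card']
  rfl

lemma descFactorial_mul_ascFactorial_eq {n k s : ℕ} (hk : k ≤ n) (hn : 2 ≤ n) (hsk : 2 ≤ s + k) :
    n.descFactorial k * (k + n).ascFactorial (n - 2 + s) =
      n ! * ((2 * n - 1).choose (n - k) * (2 * n + s + k - 3).choose (2 * n - 1) *
        (s + k - 2)!) := by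
  have hdesc : (n - k)! * n.descFactorial k = n ! := Nat.factorial_mul_descFactorial hk
  have hasc : (k + n - 1)! * (k + n).ascFactorial (n - 2 + s) = (2 * n + s + k - 3)! := by
    rw [Nat.factorial_mul_ascFactorial' _ _ (by omega)]
    congr 1
    omega
  have hchoose : (2 * n - 1).choose (n - k) * (n - k)! * (k + n - 1)! = (2 * n - 1)! := by
    convert Nat.choose_mul_factorial_mul_factorial (show n - k ≤ 2 * n - 1 by omega) using 3
    omega
  have hchoose' : (2 * n + s + k - 3).choose (2 * n - 1) * (2 * n - 1)! * (s + k - 2)! =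
      (2 * n + s + k - 3)! := by
    convert Nat.choose_mul_factorial_mul_factorial
      (show 2 * n - 1 ≤ 2 * n + s + k - 3 by omega) using 3
    omega
  refine Nat.eq_of_mul_eq_mul_left (Nat.mul_pos (n - k).factorial_pos (k + n - 1).factorial_pos) ?_
  calc (n - k)! * (k + n - 1)! * (n.descFactorial k * (k + n).ascFactorial (n - 2 + s))
      = n ! * (2 * n + s + k - 3)! := by rw [mul_mul_mul_comm, hdesc, hasc]
    _ = _ := by rw [← hchoose', ← hchoose]; ring

theorem decorated_tree_count_general (k s : ℕ) (hV : 2 ≤ Fintype.card V)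
    (hkV : k ≤ Fintype.card V) (hsk : 2 ≤ s + k) :
    (1 / ((Fintype.card V).factorial : ℚ)) *
        ∑ T : {G : SimpleGraph V // G.IsTree},
          ∑ c : Fin k ↪ V,
            ∑ mk : Fin s → V,
              ∏ i : V,
                (((T.1.neighborSet i).ncard +
                    (if ∃ j, c j = i then 1 else 0) +
                    (Finset.univ.filter fun j => mk j = i).card - 1).factorial : ℚ)
      = ((2 * Fintype.card V - 1).choose (Fintype.card V - k) : ℚ) *
          ((2 * Fintype.card V + s + k - 3).choose (2 * Fintype.card V - 1) : ℚ) *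
          ((s + k - 2).factorial : ℚ) := by
  have hcount : ∑ T : LabelledTree V, ∑ c : Fin k ↪ V, ∑ mk : Fin s → V,
      ∏ i, (T.1.degree i + (if ∃ j, c j = i then 1 else 0) + letterCount mk i - 1)! =
      (Fintype.card V).descFactorial k *
        (k + Fintype.card V).ascFactorial (Fintype.card V - 2 + s) := by
    rw [sum_comm]
    simp only [sum_labelledTree_sum_prod_factorial (Nat.sub_add_cancel hV).symm,
      factorial_ite_one_zero, prod_const_one, sum_ite_exists_eq, one_mul, sum_const, card_univ,
      Fintype.card_embedding_eq, Fintype.card_fin, smul_eq_mul]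
  rw [descFactorial_mul_ascFactorial_eq hkV hV hsk] at hcount
  rw [one_div, inv_mul_eq_iff_eq_mul₀ (by positivity)]
  simp only [ncard_neighborSet]
  exact_mod_cast hcount

end DecoratedTrees

theorem decorated_tree_count (n k q : ℕ) (hk : 1 ≤ k) (hkn : k ≤ n) (hn : 2 ≤ n)
    (hqk : 2 ≤ 2 * q + k) :
    (1 / (n.factorial : ℚ)) *
        ∑ T : {G : SimpleGraph (Fin n) // G.IsTree},
          ∑ c : Fin k ↪ Fin n,
            ∑ mk : Fin (2 * q) → Fin n,
              ∏ i : Fin n,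
                (((T.1.neighborSet i).ncard +
                    (if ∃ j, c j = i then 1 else 0) +
                    (Finset.univ.filter fun j => mk j = i).card - 1).factorial : ℚ)
      = ((2 * n - 1).choose (n - k) : ℚ) *
          ((2 * n + 2 * q + k - 3).choose (2 * n - 1) : ℚ) *
          ((2 * q + k - 2).factorial : ℚ) := by
  simpa using decorated_tree_count_general (V := Fin n) k (2 * q) (by simpa) (by simpa) hqk
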